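/- arXiv:1409.3902 — 6 statements merged into one kernel-verified Lean document; each statement's English description precedes it below -/
import Mathlib

section
/- The supremum of S(τ, p_p, p_u) over all feasible triples for problem P₁ equals the supremum of the function p_u ↦ S(K, (P − (T − K)·p_u)/K, p_u) over p_u ∈ [0, P/(T − K)]. In other words, problem P₁ is equivalent to the one-dimensional problem P₂ obtained by setting τ = K and p_p = (P − (T − K)p_u)/K. -/
open Finset

/-- Sum spectral efficiency `S(τ, p_p, p_u)` for `K` terminals with constants `a b c d`. -/
noncomputable def sumSE (T K : ℕ) (a b c d : Fin K → ℝ) (τ pp pu : ℝ) : ℝ :=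
  (1 - τ / T) * ∑ k : Fin K, Real.logb 2
    (1 + a k * τ * pp * pu / (b k * τ * pp * pu + c k * pu + d k * τ * pp + 1))

/-- Feasibility for problem `P₁`. -/
def FeasibleP1 (T K : ℕ) (P : ℝ) (τ : ℕ) (pp pu : ℝ) : Prop :=
  K ≤ τ ∧ τ ≤ T ∧ 0 ≤ pp ∧ 0 ≤ pu ∧ (τ : ℝ) * pp + ((T : ℝ) - τ) * pu = P

/-!
The rates depend on `τ` and `p_p` only through the pilot energy `e = τ * p_p`. Keep `e` fixed,
shorten the pilots from `τ` to `K`, and spread the data energy `(T - τ) * p_u` over the `T - K`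
symbols now available, so that the data power is multiplied by `θ = (T - τ) / (T - K) ≤ 1`. At
fixed `e` the rate is a concave function of the data power that vanishes at `0`, so it loses at
most the factor `θ`, and this is exactly what the prelog factor gains:
`1 - τ / T = (1 - K / T) * θ`.
-/

lemma mul_logb_one_add_le_logb_one_add_mul {β x θ : ℝ} (hβ : 1 < β) (hx : -1 < x)
    (hθ₀ : 0 ≤ θ) (hθ₁ : θ ≤ 1) :
    θ * Real.logb β (1 + x) ≤ Real.logb β (1 + θ * x) := by
  have hx' : 0 < 1 + x := by linarith
  rw [← Real.logb_rpow_eq_mul_logb_of_pos hx']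
  exact Real.logb_le_logb_of_le hβ (Real.rpow_pos_of_pos hx' θ)
    (rpow_one_add_le_one_add_mul_self hx.le hθ₀ hθ₁)

/-- The signal-to-interference-plus-noise ratio of a terminal with constants `a`, `b`, `c`, `d`,
as a function of the pilot energy `e = τ * p_p` and the data power `p = p_u`. -/
noncomputable def sinr (a b c d e p : ℝ) : ℝ :=
  a * e * p / (b * e * p + c * p + d * e + 1)

section sinr

variable {a b c d e p θ : ℝ}

lemma sinr_nonneg (ha : 0 ≤ a) (hb : 0 ≤ b) (hc : 0 ≤ c) (hd : 0 ≤ d) (he : 0 ≤ e)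
    (hp : 0 ≤ p) : 0 ≤ sinr a b c d e p := by
  unfold sinr
  positivity

lemma mul_sinr_le_sinr_mul (ha : 0 ≤ a) (hb : 0 ≤ b) (hc : 0 ≤ c) (hd : 0 ≤ d) (he : 0 ≤ e)
    (hp : 0 ≤ p) (hθ₀ : 0 ≤ θ) (hθ₁ : θ ≤ 1) :
    θ * sinr a b c d e p ≤ sinr a b c d e (θ * p) := by
  have hθp : θ * p ≤ p := mul_le_of_le_one_left hp hθ₁
  calc θ * sinr a b c d e p
      = a * e * (θ * p) / (b * e * p + c * p + d * e + 1) := by unfold sinr; ring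
    _ ≤ sinr a b c d e (θ * p) := by unfold sinr; gcongr

lemma mul_logb_one_add_sinr_le (ha : 0 ≤ a) (hb : 0 ≤ b) (hc : 0 ≤ c) (hd : 0 ≤ d)
    (he : 0 ≤ e) (hp : 0 ≤ p) (hθ₀ : 0 ≤ θ) (hθ₁ : θ ≤ 1) :
    θ * Real.logb 2 (1 + sinr a b c d e p) ≤ Real.logb 2 (1 + sinr a b c d e (θ * p)) := by
  have hs : 0 ≤ sinr a b c d e p := sinr_nonneg ha hb hc hd he hp
  calc θ * Real.logb 2 (1 + sinr a b c d e p)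
      ≤ Real.logb 2 (1 + θ * sinr a b c d e p) :=
        mul_logb_one_add_le_logb_one_add_mul one_lt_two (by linarith) hθ₀ hθ₁
    _ ≤ Real.logb 2 (1 + sinr a b c d e (θ * p)) :=
        Real.logb_le_logb_of_le one_lt_two (by positivity) <| by
          gcongr; exact mul_sinr_le_sinr_mul ha hb hc hd he hp hθ₀ hθ₁

end sinr

section sumSE

variable {T K : ℕ} {a b c d : Fin K → ℝ} {τ σ pp pu : ℝ}

lemma sumSE_eq_mul_sum_logb_one_add_sinr :
    sumSE T K a b c d τ pp pu =
      (1 - τ / T) * ∑ k, Real.logb 2 (1 + sinr (a k) (b k) (c k) (d k) (τ * pp) pu) := by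
  simp only [sumSE, sinr, mul_assoc]

lemma sumSE_le_sumSE_shorten_pilots (ha : ∀ k, 0 ≤ a k) (hb : ∀ k, 0 ≤ b k) (hc : ∀ k, 0 ≤ c k)
    (hd : ∀ k, 0 ≤ d k) (hσ : 0 < σ) (hστ : σ ≤ τ) (hτT : τ ≤ T) (hσT : σ < T)
    (hpp : 0 ≤ pp) (hpu : 0 ≤ pu) :
    sumSE T K a b c d τ pp pu ≤
      sumSE T K a b c d σ (τ * pp / σ) ((T - τ) / (T - σ) * pu) := by
  have hT : (0 : ℝ) < T := hσ.trans hσT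
  have hTσ : 0 < T - σ := sub_pos.2 hσT
  have hprelog : 0 ≤ 1 - σ / T := sub_nonneg.2 <| (div_le_one hT).2 hσT.le
  have hpilot : 0 ≤ τ * pp := mul_nonneg (hσ.le.trans hστ) hpp
  have hθ₀ : 0 ≤ (T - τ) / (T - σ) := div_nonneg (sub_nonneg.2 hτT) hTσ.le
  have hθ₁ : (T - τ) / (T - σ) ≤ 1 := (div_le_one hTσ).2 (by linarith)
  have hprelog_eq : 1 - τ / T = (1 - σ / T) * ((T - τ) / (T - σ)) := by field_simp
  simp only [sumSE_eq_mul_sum_logb_one_add_sinr, mul_div_cancel₀ (τ * pp) hσ.ne']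
  rw [hprelog_eq, mul_assoc, mul_sum]
  gcongr with k
  exact mul_logb_one_add_sinr_le (ha k) (hb k) (hc k) (hd k) hpilot hpu hθ₀ hθ₁

end sumSE

section FeasibleP1

variable {T K τ : ℕ} {P pp pu : ℝ}

lemma FeasibleP1.shorten_pilots (h : FeasibleP1 T K P τ pp pu) (hK : 0 < K) (hKT : K < T) :
    FeasibleP1 T K P K (τ * pp / K) ((T - τ) / (T - K) * pu) := by
  obtain ⟨-, hτT, hpp, hpu, hP⟩ := h
  have hK' : (0 : ℝ) < K := mod_cast hK
  have hTK : (0 : ℝ) < T - K := sub_pos.2 (mod_cast hKT)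
  have hTτ : (0 : ℝ) ≤ T - τ := sub_nonneg.2 (mod_cast hτT)
  refine ⟨le_rfl, hKT.le, by positivity, by positivity, ?_⟩
  rw [← hP, mul_div_cancel₀ _ hK'.ne', ← mul_assoc, mul_div_cancel₀ _ hTK.ne']

lemma feasibleP1_self_iff (hK : 0 < K) (hKT : K < T) :
    FeasibleP1 T K P K pp pu ↔
      pu ∈ Set.Icc (0 : ℝ) (P / (T - K)) ∧ pp = (P - (T - K) * pu) / K := by
  have hK' : (0 : ℝ) < K := mod_cast hK
  have hTK : (0 : ℝ) < T - K := sub_pos.2 (mod_cast hKT)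
  rw [Set.mem_Icc, le_div_iff₀' hTK, eq_div_iff hK'.ne']
  constructor
  · rintro ⟨-, -, hpp, hpu, hP⟩
    have hpilot : 0 ≤ K * pp := by positivity
    exact ⟨⟨hpu, by linarith⟩, by linarith⟩
  · rintro ⟨⟨hpu, hdata⟩, hpp⟩
    exact ⟨le_rfl, hKT.le, nonneg_of_mul_nonneg_left (by linarith) hK', hpu, by linarith⟩

end FeasibleP1

theorem stmt_1 (T K : ℕ) (hK : 0 < K) (hKT : K < T) (P : ℝ) (hP : 0 < P)
    (a b c d : Fin K → ℝ) (ha : ∀ k, 0 < a k) (hb : ∀ k, 0 ≤ b k)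
    (hc : ∀ k, 0 ≤ c k) (hd : ∀ k, 0 ≤ d k) :
    sSup {s : ℝ | ∃ (τ : ℕ) (pp pu : ℝ), FeasibleP1 T K P τ pp pu ∧
        s = sumSE T K a b c d τ pp pu} =
    sSup {s : ℝ | ∃ pu ∈ Set.Icc (0 : ℝ) (P / ((T : ℝ) - K)),
        s = sumSE T K a b c d K ((P - ((T : ℝ) - K) * pu) / K) pu} := by
  apply csSup_eq_csSup_of_forall_exists_le
  · rintro _ ⟨τ, pp, pu, hfeas, rfl⟩
    obtain ⟨hmem, hpp_eq⟩ := (feasibleP1_self_iff hK hKT).1 (hfeas.shorten_pilots hK hKT)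
    refine ⟨_, ⟨_, hmem, rfl⟩, ?_⟩
    rw [← hpp_eq]
    obtain ⟨hKτ, hτT, hpp, hpu, -⟩ := hfeas
    exact sumSE_le_sumSE_shorten_pilots (fun k ↦ (ha k).le) hb hc hd (mod_cast hK)
      (mod_cast hKτ) (mod_cast hτT) (mod_cast hKT) hpp hpu
  · rintro _ ⟨pu, hmem, rfl⟩
    exact ⟨_, ⟨K, _, pu, (feasibleP1_self_iff hK hKT).2 ⟨hmem, rfl⟩, rfl⟩, le_rfl⟩
end

section
/- The objective function of problem P₂, namely p ↦ (1 − K/T) · Σ_{k=1}^K log₂(1 + f_k(p)), is a concave function of p on the interval [0, P/(T − K)]; that is, problem P₂ is a concave program. -/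
open Finset

/-!
Write `q = P - (T - K) p`, so that `((T - K) / P) p + (1 / P) q = 1`. Replacing the constant `1` in
the denominator of `f_k` by this linear form gives
`f_k = a p q / (b p q + γ p + δ q)` with `γ = c + (T - K) / P` and `δ = d + 1 / P`, that is,
`a / f_k = b + γ / q + δ / p`. So `f_k / a` is a weighted parallel sum of affine functions, and
parallel sums `x y / (α x + β y)` of concave functions are concave, because
`(x, y) ↦ x y / (α x + β y)` lies below its tangent planes, whose coefficients are nonnegative.
Finally, `logb 2` is concave and increasing.
-/

section ParallelSum

variable {𝕜 E : Type*} [Field 𝕜] [LinearOrder 𝕜] [IsStrictOrderedRing 𝕜]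
  [AddCommMonoid E] [SMul 𝕜 E] {s : Set E} {f g : E → 𝕜}

/- The right-hand side is the tangent plane at `(x₀, y₀)`; it has no constant term because the
left-hand side is homogeneous of degree one. -/
lemma mul_div_mul_add_mul_le_tangent {α β x y x₀ y₀ : 𝕜} (hα : 0 ≤ α) (hβ : 0 ≤ β)
    (h : 0 < α * x + β * y) (h₀ : 0 < α * x₀ + β * y₀) :
    x * y / (α * x + β * y) ≤ (β * y₀ ^ 2 * x + α * x₀ ^ 2 * y) / (α * x₀ + β * y₀) ^ 2 := by
  rw [div_le_div_iff₀ h (pow_pos h₀ 2), ← sub_nonneg]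
  calc 0 ≤ α * β * (y₀ * x - x₀ * y) ^ 2 := by positivity
    _ = _ := by ring

lemma concaveOn_mul_div_mul_add_mul (hf : ConcaveOn 𝕜 s f) (hg : ConcaveOn 𝕜 s g) {α β : 𝕜}
    (hα : 0 ≤ α) (hβ : 0 ≤ β) (hpos : ∀ x ∈ s, 0 < α * f x + β * g x) :
    ConcaveOn 𝕜 s fun x ↦ f x * g x / (α * f x + β * g x) := by
  refine ⟨hf.1, fun x hx y hy u v hu hv huv ↦ ?_⟩
  have hz := hpos _ (hf.1 hx hy hu hv huv)
  have hfz := hf.2 hx hy hu hv huv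
  have hgz := hg.2 hx hy hu hv huv
  simp only [smul_eq_mul] at hfz hgz ⊢
  generalize f (u • x + v • y) = f₀ at *
  generalize g (u • x + v • y) = g₀ at *
  calc u * (f x * g x / (α * f x + β * g x)) + v * (f y * g y / (α * f y + β * g y))
    _ ≤ u * ((β * g₀ ^ 2 * f x + α * f₀ ^ 2 * g x) / (α * f₀ + β * g₀) ^ 2) +
        v * ((β * g₀ ^ 2 * f y + α * f₀ ^ 2 * g y) / (α * f₀ + β * g₀) ^ 2) := by
      gcongr u * ?_ + v * ?_
      · exact mul_div_mul_add_mul_le_tangent hα hβ (hpos x hx) hz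
      · exact mul_div_mul_add_mul_le_tangent hα hβ (hpos y hy) hz
    _ = (β * g₀ ^ 2 * (u * f x + v * f y) + α * f₀ ^ 2 * (u * g x + v * g y)) /
        (α * f₀ + β * g₀) ^ 2 := by ring
    _ ≤ (β * g₀ ^ 2 * f₀ + α * f₀ ^ 2 * g₀) / (α * f₀ + β * g₀) ^ 2 := by gcongr
    _ = f₀ * g₀ / (α * f₀ + β * g₀) := by
      rw [div_eq_div_iff (pow_pos hz 2).ne' hz.ne']
      ring

lemma concaveOn_mul_div_mul_mul_add (hf : ConcaveOn 𝕜 s f) (hg : ConcaveOn 𝕜 s g)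
    (hfg : ∀ x ∈ s, 0 ≤ f x * g x) {α β b : 𝕜} (hα : 0 ≤ α) (hβ : 0 ≤ β) (hb : 0 ≤ b)
    (hpos : ∀ x ∈ s, 0 < α * f x + β * g x) :
    ConcaveOn 𝕜 s fun x ↦ f x * g x / (b * (f x * g x) + (α * f x + β * g x)) := by
  have hden : ∀ x ∈ s, 0 < b * (f x * g x / (α * f x + β * g x)) + 1 * 1 := fun x hx ↦ by
    have := hfg x hx
    have := hpos x hx
    positivity
  refine (concaveOn_mul_div_mul_add_mul (concaveOn_mul_div_mul_add_mul hf hg hα hβ hpos)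
    (concaveOn_const 1 hf.1) hb zero_le_one hden).congr fun x hx ↦ ?_
  have := hpos x hx
  simp only [mul_one]
  rw [← mul_div_assoc, div_add_one this.ne', div_div_div_cancel_right₀ this.ne']

lemma concaveOn_mul_div_of_add_eq_one (hf : ConcaveOn 𝕜 s f) (hg : ConcaveOn 𝕜 s g)
    (hf₀ : ∀ x ∈ s, 0 ≤ f x) (hg₀ : ∀ x ∈ s, 0 ≤ g x) {μ ν : 𝕜} (hμ : 0 ≤ μ) (hν : 0 ≤ ν)
    (hfg : ∀ x ∈ s, μ * f x + ν * g x = 1) {a b c d : 𝕜}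
    (ha : 0 ≤ a) (hb : 0 ≤ b) (hc : 0 ≤ c) (hd : 0 ≤ d) :
    ConcaveOn 𝕜 s fun x ↦
      a * f x * g x / (b * f x * g x + c * g x + d * f x + 1) := by
  have hlin : ∀ x ∈ s, (d + μ) * f x + (c + ν) * g x = c * g x + d * f x + 1 := fun x hx ↦ by
    linear_combination hfg x hx
  have hpos : ∀ x ∈ s, 0 < (d + μ) * f x + (c + ν) * g x := fun x hx ↦ by
    have := hf₀ x hx
    have := hg₀ x hx
    rw [hlin x hx]
    positivity
  have hmul : ∀ x ∈ s, 0 ≤ f x * g x := fun x hx ↦ mul_nonneg (hf₀ x hx) (hg₀ x hx)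
  refine ((concaveOn_mul_div_mul_mul_add hf hg hmul (add_nonneg hd hμ) (add_nonneg hc hν)
    hb hpos).smul ha).congr fun x hx ↦ ?_
  simp only [smul_eq_mul, hlin x hx]
  ring

end ParallelSum

lemma sub_mul_nonneg_of_mem_Icc {m P p : ℝ} (hm : 0 < m) (hp : p ∈ Set.Icc 0 (P / m)) :
    0 ≤ P - m * p :=
  sub_nonneg.2 ((le_div_iff₀' hm).1 hp.2)

lemma concaveOn_mul_div_Icc {m P a b c d : ℝ} (hm : 0 < m) (hP : 0 < P)
    (ha : 0 ≤ a) (hb : 0 ≤ b) (hc : 0 ≤ c) (hd : 0 ≤ d) :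
    ConcaveOn ℝ (Set.Icc 0 (P / m)) fun p ↦
      a * (P - m * p) * p / (b * (P - m * p) * p + c * p + d * (P - m * p) + 1) := by
  have hs : Convex ℝ (Set.Icc 0 (P / m)) := convex_Icc _ _
  have hq : ConcaveOn ℝ (Set.Icc 0 (P / m)) fun p ↦ P - m * p :=
    (concaveOn_const P hs).sub ((convexOn_id hs).smul hm.le)
  refine concaveOn_mul_div_of_add_eq_one (μ := 1 / P) (ν := m / P) hq (concaveOn_id hs)
    (fun _ ↦ sub_mul_nonneg_of_mem_Icc hm) (fun _ hp ↦ hp.1) (by positivity) (by positivity)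
    (fun p _ ↦ ?_) ha hb hc hd
  simp only [id_eq]
  field_simp
  ring

lemma mul_div_nonneg_of_mem_Icc {m P a b c d p : ℝ} (hm : 0 < m)
    (ha : 0 ≤ a) (hb : 0 ≤ b) (hc : 0 ≤ c) (hd : 0 ≤ d) (hp : p ∈ Set.Icc 0 (P / m)) :
    0 ≤ a * (P - m * p) * p / (b * (P - m * p) * p + c * p + d * (P - m * p) + 1) := by
  have hp₀ : 0 ≤ p := hp.1
  have hq₀ : 0 ≤ P - m * p := sub_mul_nonneg_of_mem_Icc hm hp
  positivity

lemma concaveOn_logb_comp {E : Type*} [AddCommMonoid E] [SMul ℝ E] {s : Set E} {f : E → ℝ}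
    {b : ℝ} (hb : 1 < b) (hf : ConcaveOn ℝ s f) (hpos : ∀ x ∈ s, 0 < f x) :
    ConcaveOn ℝ s fun x ↦ Real.logb b (f x) := by
  have hlog : ConcaveOn ℝ s fun x ↦ Real.log (f x) := by
    refine ⟨hf.1, fun x hx y hy u v hu hv huv ↦ ?_⟩
    have hmem := convex_Ioi (0 : ℝ) (hpos x hx) (hpos y hy) hu hv huv
    calc u • Real.log (f x) + v • Real.log (f y)
      _ ≤ Real.log (u • f x + v • f y) :=
        strictConcaveOn_log_Ioi.concaveOn.2 (hpos x hx) (hpos y hy) hu hv huv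
      _ ≤ Real.log (f (u • x + v • y)) := Real.log_le_log hmem (hf.2 hx hy hu hv huv)
  refine (hlog.smul (inv_nonneg.2 (Real.log_pos hb).le)).congr fun x _ ↦ ?_
  simp only [smul_eq_mul, Real.logb, div_eq_inv_mul]

lemma concaveOn_finset_sum {𝕜 E β ι : Type*} [Semiring 𝕜] [PartialOrder 𝕜] [AddCommMonoid E]
    [SMul 𝕜 E] [AddCommMonoid β] [PartialOrder β] [IsOrderedAddMonoid β] [Module 𝕜 β]
    {s : Set E} (hs : Convex 𝕜 s) (t : Finset ι) {f : ι → E → β}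
    (hf : ∀ i ∈ t, ConcaveOn 𝕜 s (f i)) : ConcaveOn 𝕜 s fun x ↦ ∑ i ∈ t, f i x := by
  refine ⟨hs, fun x hx y hy u v hu hv huv ↦ ?_⟩
  rw [smul_sum, smul_sum, ← sum_add_distrib]
  exact sum_le_sum fun i hi ↦ (hf i hi).2 hx hy hu hv huv

theorem stmt_2 (T K : ℕ) (hK : 0 < K) (hKT : K < T) (P : ℝ) (hP : 0 < P)
    (a b c d : Fin K → ℝ) (ha : ∀ k, 0 < a k) (hb : ∀ k, 0 ≤ b k)
    (hc : ∀ k, 0 ≤ c k) (hd : ∀ k, 0 ≤ d k) :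
    ConcaveOn ℝ (Set.Icc (0 : ℝ) (P / ((T : ℝ) - K)))
      (fun p => (1 - (K : ℝ) / T) * ∑ k : Fin K, Real.logb 2
        (1 + a k * (P - ((T : ℝ) - K) * p) * p /
          (b k * (P - ((T : ℝ) - K) * p) * p + c k * p +
            d k * (P - ((T : ℝ) - K) * p) + 1))) := by
  have hm : (0 : ℝ) < (T : ℝ) - K := sub_pos.2 (Nat.cast_lt.2 hKT)
  have hprelog : 0 ≤ 1 - (K : ℝ) / T :=
    sub_nonneg.2 (div_le_one_of_le₀ (Nat.cast_le.2 hKT.le) T.cast_nonneg)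
  refine (concaveOn_finset_sum (convex_Icc _ _) univ fun k _ ↦ ?_).smul hprelog
  refine concaveOn_logb_comp one_lt_two ?_ fun p hp ↦ ?_
  · exact (concaveOn_const 1 (convex_Icc _ _)).add
      (concaveOn_mul_div_Icc hm hP (ha k).le (hb k) (hc k) (hd k))
  · exact add_pos_of_pos_of_nonneg one_pos
      (mul_div_nonneg_of_mem_Icc hm (ha k).le (hb k) (hc k) (hd k) hp)
end

section
/- For each k, the function f_k(p) = a_k (P − (T − K)p) p / (b_k (P − (T − K)p) p + c_k p + d_k (P − (T − K)p) + 1) is concave on the interval [0, P/(T − K)]. -/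
/-!
Write `m = T - K`, `N = (P - m p) p` and `L = c p + d (P - m p) + 1`, so that the function is
`a N / (b N + L)`. Dividing by `L`, this is `a φ(N / L)` with `φ z = z / (b z + 1)`, which is
increasing and concave on `[0, ∞)`. So it suffices that `N / L` is concave. A quadratic over a
positive affine function is an affine function plus `r / L`, where `r` is the value of the
quadratic at the zero of `L`, so it is concave as soon as `r ≤ 0`. Multiplied by the squared slope
of `L`, `r` becomes the resultant, which governs the gap in Jensen's inequality also when `L` is
constant; here the resultant is `-(d P + 1) (m + c P)`.
-/

section Composition

variable {𝕜 E β γ : Type*} [Semiring 𝕜] [PartialOrder 𝕜]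
  [AddCommMonoid E] [SMul 𝕜 E] [AddCommMonoid β] [PartialOrder β] [SMul 𝕜 β]
  [AddCommMonoid γ] [PartialOrder γ] [SMul 𝕜 γ]

theorem concaveOn_comp_of_mapsTo {s : Set E} {t : Set β} {f : E → β} {g : β → γ}
    (hg : ConcaveOn 𝕜 t g) (hg_mono : MonotoneOn g t) (hf : ConcaveOn 𝕜 s f)
    (hst : Set.MapsTo f s t) : ConcaveOn 𝕜 s (g ∘ f) := by
  refine ⟨hf.1, fun x hx y hy a b ha hb hab => ?_⟩
  calc a • g (f x) + b • g (f y)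
      ≤ g (a • f x + b • f y) := hg.2 (hst hx) (hst hy) ha hb hab
    _ ≤ g (f (a • x + b • y)) :=
        hg_mono (hg.1 (hst hx) (hst hy) ha hb hab) (hst (hf.1 hx hy ha hb hab))
          (hf.2 hx hy ha hb hab)

end Composition

section Field

variable {𝕜 : Type*} [Field 𝕜]

theorem quadratic_div_affine_jensen_gap {q₀ q₁ q₂ l₀ l₁ x y α β : 𝕜} (hαβ : α + β = 1)
    (hx : l₀ + l₁ * x ≠ 0) (hy : l₀ + l₁ * y ≠ 0) (hz : l₀ + l₁ * (α * x + β * y) ≠ 0) :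
    (q₀ + q₁ * (α * x + β * y) + q₂ * (α * x + β * y) ^ 2) / (l₀ + l₁ * (α * x + β * y)) -
        (α * ((q₀ + q₁ * x + q₂ * x ^ 2) / (l₀ + l₁ * x)) +
          β * ((q₀ + q₁ * y + q₂ * y ^ 2) / (l₀ + l₁ * y))) =
      α * β * (x - y) ^ 2 * -(q₀ * l₁ ^ 2 - q₁ * l₀ * l₁ + q₂ * l₀ ^ 2) /
        ((l₀ + l₁ * x) * (l₀ + l₁ * y) * (l₀ + l₁ * (α * x + β * y))) := by
  obtain rfl : β = 1 - α := eq_sub_of_add_eq' hαβ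
  rw [mul_div_assoc', mul_div_assoc', div_add_div _ _ hx hy, div_sub_div _ _ hz (mul_ne_zero hx hy)]
  congr 1 <;> ring

variable [LinearOrder 𝕜] [IsStrictOrderedRing 𝕜]

theorem concaveOn_quadratic_div_affine {q₀ q₁ q₂ l₀ l₁ : 𝕜} {s : Set 𝕜} (hs : Convex 𝕜 s)
    (hpos : ∀ x ∈ s, 0 < l₀ + l₁ * x) (hres : q₀ * l₁ ^ 2 - q₁ * l₀ * l₁ + q₂ * l₀ ^ 2 ≤ 0) :
    ConcaveOn 𝕜 s (fun x => (q₀ + q₁ * x + q₂ * x ^ 2) / (l₀ + l₁ * x)) := by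
  refine ⟨hs, fun x hx y hy α β hα hβ hαβ => ?_⟩
  have hLx := hpos x hx
  have hLy := hpos y hy
  have hLz := hpos _ (hs hx hy hα hβ hαβ)
  simp only [smul_eq_mul] at hLz ⊢
  rw [← sub_nonneg, quadratic_div_affine_jensen_gap hαβ hLx.ne' hLy.ne' hLz.ne']
  have := neg_nonneg.2 hres
  positivity

theorem concaveOn_div_mul_add_one {b : 𝕜} (hb : 0 ≤ b) :
    ConcaveOn 𝕜 (Set.Ici 0) (fun z => z / (b * z + 1)) := by
  have hpos : ∀ z ∈ Set.Ici (0 : 𝕜), 0 < 1 + b * z := fun z (hz : 0 ≤ z) => by positivity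
  simpa [add_comm] using concaveOn_quadratic_div_affine (q₀ := 0) (q₁ := 1) (q₂ := 0)
    (convex_Ici 0) hpos (by simpa using hb)

theorem monotoneOn_div_mul_add_one {b : 𝕜} (hb : 0 ≤ b) :
    MonotoneOn (fun z => z / (b * z + 1)) (Set.Ici 0) := by
  intro x (hx : 0 ≤ x) y (hy : 0 ≤ y) hxy
  rw [div_le_div_iff₀ (by positivity) (by positivity)]
  linarith

theorem concaveOn_div_mul_add {E : Type*} [AddCommMonoid E] [SMul 𝕜 E] {s : Set E} {N L : E → 𝕜}
    {b : 𝕜} (hb : 0 ≤ b) (hN : ∀ x ∈ s, 0 ≤ N x) (hL : ∀ x ∈ s, 0 < L x)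
    (hNL : ConcaveOn 𝕜 s (fun x => N x / L x)) :
    ConcaveOn 𝕜 s (fun x => N x / (b * N x + L x)) := by
  have hcomp := concaveOn_comp_of_mapsTo (concaveOn_div_mul_add_one hb)
    (monotoneOn_div_mul_add_one hb) hNL (fun x hx => div_nonneg (hN x hx) (hL x hx).le)
  refine hcomp.congr fun x hx => ?_
  have hLx := (hL x hx).ne'
  simp only [Function.comp_apply]
  field_simp

theorem stmt_3_general {a b c d m P : 𝕜} (hm : 0 < m) (hP : 0 ≤ P)
    (ha : 0 ≤ a) (hb : 0 ≤ b) (hc : 0 ≤ c) (hd : 0 ≤ d) :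
    ConcaveOn 𝕜 (Set.Icc 0 (P / m))
      (fun p => a * (P - m * p) * p /
        (b * (P - m * p) * p + c * p + d * (P - m * p) + 1)) := by
  have hu : ∀ p ∈ Set.Icc 0 (P / m), 0 ≤ P - m * p := fun p hp =>
    sub_nonneg.2 ((le_div_iff₀' hm).1 hp.2)
  have hN : ∀ p ∈ Set.Icc 0 (P / m), 0 ≤ (P - m * p) * p := fun p hp =>
    mul_nonneg (hu p hp) hp.1
  have hL : ∀ p ∈ Set.Icc 0 (P / m), 0 < (d * P + 1) + (c - d * m) * p := fun p hp => by
    have := mul_nonneg hc hp.1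
    have := mul_nonneg hd (hu p hp)
    linarith
  have hres : 0 * (c - d * m) ^ 2 - P * (d * P + 1) * (c - d * m) + -m * (d * P + 1) ^ 2 ≤ 0 := by
    have : 0 ≤ (d * P + 1) * (m + c * P) := by positivity
    linarith
  have hNL : ConcaveOn 𝕜 (Set.Icc 0 (P / m))
      (fun p => (P - m * p) * p / ((d * P + 1) + (c - d * m) * p)) :=
    (concaveOn_quadratic_div_affine (convex_Icc _ _) hL hres).congr fun p _ => by ring
  exact ((concaveOn_div_mul_add hb hN hL hNL).smul ha).congr fun p _ => by
    simp only [smul_eq_mul]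
    ring

end Field

theorem stmt_3 (T K : ℕ) (hK : 0 < K) (hKT : K < T) (P : ℝ) (hP : 0 < P)
    (a b c d : ℝ) (ha : 0 < a) (hb : 0 ≤ b) (hc : 0 ≤ c) (hd : 0 ≤ d) :
    ConcaveOn ℝ (Set.Icc (0 : ℝ) (P / ((T : ℝ) - K)))
      (fun p => a * (P - ((T : ℝ) - K) * p) * p /
        (b * (P - ((T : ℝ) - K) * p) * p + c * p +
          d * (P - ((T : ℝ) - K) * p) + 1)) :=
  stmt_3_general (sub_pos.2 (Nat.cast_lt.2 hKT)) hP.le ha.le hb hc hd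
end

section
/- The supremum of S(τ, p_p, p_u) over all (τ, p_p, p_u) with τ an integer, K ≤ τ ≤ T, p_p ≥ 0, p_u ≥ 0, and the inequality constraint τ·p_p + (T − τ)·p_u ≤ P equals the supremum of S over the same set with the constraint replaced by the equality τ·p_p + (T − τ)·p_u = P. In particular, for every point satisfying the strict inequality τ·p_p + (T − τ)·p_u < P with τ < T, there is a point satisfying the equality whose sum spectral efficiency is at least as large. -/
open Finset

/-!
A larger data power `p_u` increases every rate, because `p_u` enters the rate through a fraction
`A p_u / (B p_u + C)` with nonnegative coefficients. When `τ < T`, leftover energy can therefore be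
spent on `p_u` without loss. When `τ = T` there is no time left for data and the spectral efficiency
vanishes, so the leftover energy can go to `p_p`. Both moves keep the pilot length `τ`.
-/

theorem monotoneOn_mul_div_mul_add {A B C : ℝ} (hA : 0 ≤ A) (hB : 0 ≤ B) (hC : 0 < C) :
    MonotoneOn (fun x ↦ A * x / (B * x + C)) (Set.Ici 0) := by
  intro x (hx : 0 ≤ x) y (hy : 0 ≤ y) hxy
  change A * x / (B * x + C) ≤ A * y / (B * y + C)
  rw [div_le_div_iff₀ (by positivity) (by positivity)]
  have hAC : A * C * x ≤ A * C * y := by gcongr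
  linarith

/-- The rate `R_k(τ, p_p, p_u)` of one terminal, as a function of that terminal's constants
`a_k, b_k, c_k, d_k`; `sumSE` unfolds to `1 - τ / T` times the sum of these rates. -/
noncomputable def terminalRate (a b c d τ pp pu : ℝ) : ℝ :=
  Real.logb 2 (1 + a * τ * pp * pu / (b * τ * pp * pu + c * pu + d * τ * pp + 1))

theorem monotoneOn_terminalRate {a b c d τ pp : ℝ} (ha : 0 ≤ a) (hb : 0 ≤ b) (hc : 0 ≤ c)
    (hd : 0 ≤ d) (hτ : 0 ≤ τ) (hpp : 0 ≤ pp) :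
    MonotoneOn (terminalRate a b c d τ pp) (Set.Ici 0) := by
  intro x (hx : 0 ≤ x) y hy hxy
  have hratio := monotoneOn_mul_div_mul_add (A := a * τ * pp) (B := b * τ * pp + c)
    (C := d * τ * pp + 1) (by positivity) (by positivity) (by positivity) hx hy hxy
  simp only [add_mul, ← add_assoc] at hratio
  exact Real.logb_le_logb_of_le one_lt_two (by positivity) (by gcongr)

section SumSE

variable {T K : ℕ} {a b c d : Fin K → ℝ} {P τ pp pu : ℝ}

theorem monotoneOn_sumSE (ha : ∀ k, 0 ≤ a k) (hb : ∀ k, 0 ≤ b k) (hc : ∀ k, 0 ≤ c k)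
    (hd : ∀ k, 0 ≤ d k) (hτ : 0 ≤ τ) (hτT : τ ≤ T) (hpp : 0 ≤ pp) :
    MonotoneOn (sumSE T K a b c d τ pp) (Set.Ici 0) := by
  intro x hx y hy hxy
  have hfactor : 0 ≤ 1 - τ / T := sub_nonneg.2 (div_le_one_of_le₀ hτT T.cast_nonneg)
  exact mul_le_mul_of_nonneg_left (sum_le_sum fun k _ ↦
    monotoneOn_terminalRate (ha k) (hb k) (hc k) (hd k) hτ hpp hx hy hxy) hfactor

theorem sumSE_natCast_self (hT : 0 < T) : sumSE T K a b c d T pp pu = 0 := by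
  have hT' : (T : ℝ) ≠ 0 := Nat.cast_ne_zero.2 hT.ne'
  rw [sumSE, div_self hT', sub_self, zero_mul]

theorem exists_energy_eq_sumSE_le (hT : 0 < T) (ha : ∀ k, 0 ≤ a k) (hb : ∀ k, 0 ≤ b k)
    (hc : ∀ k, 0 ≤ c k) (hd : ∀ k, 0 ≤ d k) (hτ : 0 ≤ τ) (hτT : τ ≤ T) (hpp : 0 ≤ pp)
    (hpu : 0 ≤ pu) (henergy : τ * pp + (T - τ) * pu ≤ P) :
    ∃ pp' pu' : ℝ, 0 ≤ pp' ∧ 0 ≤ pu' ∧ τ * pp' + (T - τ) * pu' = P ∧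
      sumSE T K a b c d τ pp pu ≤ sumSE T K a b c d τ pp' pu' := by
  rcases hτT.lt_or_eq with hlt | rfl
  · have hdata : 0 < T - τ := sub_pos.2 hlt
    have hle : pu ≤ (P - τ * pp) / (T - τ) := by
      rw [le_div_iff₀ hdata]
      linarith
    have hpu' : 0 ≤ (P - τ * pp) / (T - τ) := hpu.trans hle
    refine ⟨pp, (P - τ * pp) / (T - τ), hpp, hpu', ?_,
      monotoneOn_sumSE ha hb hc hd hτ hτT hpp hpu hpu' hle⟩
    rw [mul_div_cancel₀ _ hdata.ne', add_sub_cancel]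
  · have hT' : (T : ℝ) ≠ 0 := Nat.cast_ne_zero.2 hT.ne'
    rw [sub_self, zero_mul, add_zero] at henergy
    have hP : 0 ≤ P := (mul_nonneg hτ hpp).trans henergy
    refine ⟨P / T, 0, div_nonneg hP hτ, le_rfl, ?_, ?_⟩
    · rw [mul_div_cancel₀ _ hT', mul_zero, add_zero]
    · rw [sumSE_natCast_self hT, sumSE_natCast_self hT]

theorem stmt_9_general {I : Set ℝ} (hI : I ⊆ Set.Icc 0 (T : ℝ)) (hT : 0 < T)
    (ha : ∀ k, 0 ≤ a k) (hb : ∀ k, 0 ≤ b k) (hc : ∀ k, 0 ≤ c k) (hd : ∀ k, 0 ≤ d k) :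
    sSup {s : ℝ | ∃ τ ∈ I, ∃ pp pu : ℝ, 0 ≤ pp ∧ 0 ≤ pu ∧
        τ * pp + (T - τ) * pu ≤ P ∧ s = sumSE T K a b c d τ pp pu} =
      sSup {s : ℝ | ∃ τ ∈ I, ∃ pp pu : ℝ, 0 ≤ pp ∧ 0 ≤ pu ∧
        τ * pp + (T - τ) * pu = P ∧ s = sumSE T K a b c d τ pp pu} ∧
    ∀ τ ∈ I, ∀ pp pu : ℝ, 0 ≤ pp → 0 ≤ pu → τ * pp + (T - τ) * pu ≤ P →
      ∃ pp' pu' : ℝ, 0 ≤ pp' ∧ 0 ≤ pu' ∧ τ * pp' + (T - τ) * pu' = P ∧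
        sumSE T K a b c d τ pp pu ≤ sumSE T K a b c d τ pp' pu' := by
  have hexhaust := fun τ (hτ : τ ∈ I) (pp pu : ℝ) ↦
    exists_energy_eq_sumSE_le (P := P) (pp := pp) (pu := pu) hT ha hb hc hd (hI hτ).1 (hI hτ).2
  refine ⟨csSup_eq_csSup_of_forall_exists_le ?_ ?_, hexhaust⟩
  · rintro _ ⟨τ, hτ, pp, pu, hpp, hpu, henergy, rfl⟩
    obtain ⟨pp', pu', hpp', hpu', henergy', hle⟩ := hexhaust τ hτ pp pu hpp hpu henergy
    exact ⟨_, ⟨τ, hτ, pp', pu', hpp', hpu', henergy', rfl⟩, hle⟩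
  · rintro _ ⟨τ, hτ, pp, pu, hpp, hpu, henergy, rfl⟩
    exact ⟨_, ⟨τ, hτ, pp, pu, hpp, hpu, henergy.le, rfl⟩, le_rfl⟩

end SumSE

theorem stmt_9 (T K : ℕ) (hK : 0 < K) (hKT : K < T) (P : ℝ) (hP : 0 < P)
    (a b c d : Fin K → ℝ) (ha : ∀ k, 0 < a k) (hb : ∀ k, 0 ≤ b k)
    (hc : ∀ k, 0 ≤ c k) (hd : ∀ k, 0 ≤ d k) :
    sSup {s : ℝ | ∃ (τ : ℕ) (pp pu : ℝ), K ≤ τ ∧ τ ≤ T ∧ 0 ≤ pp ∧ 0 ≤ pu ∧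
        (τ : ℝ) * pp + ((T : ℝ) - τ) * pu ≤ P ∧ s = sumSE T K a b c d τ pp pu} =
    sSup {s : ℝ | ∃ (τ : ℕ) (pp pu : ℝ), K ≤ τ ∧ τ ≤ T ∧ 0 ≤ pp ∧ 0 ≤ pu ∧
        (τ : ℝ) * pp + ((T : ℝ) - τ) * pu = P ∧ s = sumSE T K a b c d τ pp pu} ∧
    (∀ (τ : ℕ) (pp pu : ℝ), K ≤ τ → τ ≤ T → 0 ≤ pp → 0 ≤ pu →
      (τ : ℝ) * pp + ((T : ℝ) - τ) * pu < P → τ < T →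
      ∃ (τ' : ℕ) (pp' pu' : ℝ), K ≤ τ' ∧ τ' ≤ T ∧ 0 ≤ pp' ∧ 0 ≤ pu' ∧
        (τ' : ℝ) * pp' + ((T : ℝ) - τ') * pu' = P ∧
        sumSE T K a b c d τ pp pu ≤ sumSE T K a b c d τ' pp' pu') := by
  have hI : ((↑) : ℕ → ℝ) '' Set.Icc K T ⊆ Set.Icc 0 (T : ℝ) :=
    Set.image_subset_iff.2 fun τ hτ ↦ ⟨τ.cast_nonneg, Nat.cast_le.2 hτ.2⟩
  obtain ⟨hsup, hexhaust⟩ :=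
    stmt_9_general (P := P) hI (hK.trans hKT) (fun k ↦ (ha k).le) hb hc hd
  simp only [Set.exists_mem_image, Set.mem_Icc, and_assoc] at hsup
  simp only [← exists_and_left] at hsup
  refine ⟨hsup, fun τ pp pu hKτ hτT hpp hpu henergy _ ↦ ?_⟩
  obtain ⟨pp', pu', h⟩ := hexhaust τ ⟨τ, ⟨hKτ, hτT⟩, rfl⟩ pp pu hpp hpu henergy.le
  exact ⟨τ, pp', pu', hKτ, hτT, h⟩
end

section
/- Fix τ with 0 < τ < T and set the pilot power equal to the data power, p_p = p_u, and regard S(p_u) = (1 − τ/T) Σ_{k=1}^K log₂(1 + a_k τ p_u² / (b_k τ p_u² + c_k p_u + d_k τ p_u + 1)) as a function of p_u. Then, as p_u → 0⁺, S(p_u) = (log₂ e)·(1 − τ/T)·(Σ_{k=1}^K a_k τ)·p_u² + O(p_u³); that is, the function p_u ↦ S(p_u) − (log₂ e)(1 − τ/T)(Σ_k a_k τ)p_u² is O(p_u³) in a right neighborhood of 0 (the "squaring effect": with equal pilot and data powers the sum spectral efficiency scales as p_u²). -/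
open Finset Filter Asymptotics Topology

/-!
Each summand is `logb 2 (1 + p ^ 2 * g p)`, where the rational function `g` is differentiable at
`0` because its denominator equals `1` there. Since `log (1 + u) = u + O(u ^ 2)` and
`g p = g 0 + O(p)`, this is `logb 2 (exp 1) * g 0 * p ^ 2 + O(p ^ 3)` with `g 0 = a k * τ`.
-/

theorem log_one_add_sub_self_isBigO :
    (fun x : ℝ => Real.log (1 + x) - x) =O[𝓝 0] fun x => x ^ 2 := by
  have complex_bound := Complex.log_sub_self_isBigO.comp_tendsto
    (Complex.continuous_ofReal.tendsto' 0 0 Complex.ofReal_zero)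
  refine IsBigO.of_norm_norm (complex_bound.norm_norm.congr' ?_ ?_)
  · filter_upwards [Ioi_mem_nhds neg_one_lt_zero] with x (hx : -1 < x)
    have log_ofReal : Complex.log (1 + x) = (Real.log (1 + x) : ℝ) := by
      rw [Complex.ofReal_log (by linarith), Complex.ofReal_add, Complex.ofReal_one]
    rw [Function.comp_apply, log_ofReal, ← Complex.ofReal_sub, Complex.norm_real]
  · exact .of_forall fun x => by
      simp only [Function.comp_apply, ← Complex.ofReal_pow, Complex.norm_real]

theorem pow_mul_sub_isBigO {𝕜 : Type*} [NontriviallyNormedField 𝕜] {g : 𝕜 → 𝕜}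
    (hg : DifferentiableAt 𝕜 g 0) (n : ℕ) :
    (fun x => x ^ n * g x - g 0 * x ^ n) =O[𝓝 0] fun x => x ^ (n + 1) :=
  ((isBigO_refl (fun x : 𝕜 => x ^ n) (𝓝 0)).mul hg.isBigO_sub).congr
    (fun x => by ring) (fun x => by rw [sub_zero, pow_succ])

theorem log_one_add_pow_mul_sub_isBigO {g : ℝ → ℝ} (hg : DifferentiableAt ℝ g 0)
    {n : ℕ} (hn : n ≠ 0) :
    (fun x => Real.log (1 + x ^ n * g x) - g 0 * x ^ n) =O[𝓝 0] fun x => x ^ (n + 1) := by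
  have tendsto_zero : Tendsto (fun x => x ^ n * g x) (𝓝 0) (𝓝 0) := by
    have continuousAt_zero : ContinuousAt (fun x => x ^ n * g x) 0 :=
      (continuousAt_id.pow n).mul hg.continuousAt
    simpa only [ContinuousAt, zero_pow hn, zero_mul] using continuousAt_zero
  have sq_isBigO : (fun x => (x ^ n * g x) ^ 2) =O[𝓝 0] fun x => x ^ (n + 1) := by
    obtain ⟨m, rfl⟩ := Nat.exists_eq_add_one_of_ne_zero hn
    have bounded : (fun x => x ^ m * g x ^ 2) =O[𝓝 0] fun _ => (1 : ℝ) :=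
      ((continuousAt_id.pow m).mul (hg.continuousAt.pow 2)).tendsto.isBigO_one ℝ
    exact ((isBigO_refl (fun x : ℝ => x ^ (m + 1 + 1)) (𝓝 0)).mul bounded).congr
      (fun x => by ring) (fun x => mul_one _)
  have log_isBigO := (log_one_add_sub_self_isBigO.comp_tendsto tendsto_zero).trans sq_isBigO
  exact (log_isBigO.add (pow_mul_sub_isBigO hg n)).congr_left fun x => sub_add_sub_cancel _ _ _

theorem logb_one_add_pow_mul_sub_isBigO (β : ℝ) {g : ℝ → ℝ} (hg : DifferentiableAt ℝ g 0)
    {n : ℕ} (hn : n ≠ 0) :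
    (fun x => Real.logb β (1 + x ^ n * g x) - Real.logb β (Real.exp 1) * g 0 * x ^ n)
      =O[𝓝 0] fun x => x ^ (n + 1) := by
  refine ((log_one_add_pow_mul_sub_isBigO hg hn).const_mul_left (Real.log β)⁻¹).congr_left ?_
  intro x
  rw [Real.logb, Real.logb, Real.log_exp]
  ring

theorem stmt_11_general {ι : Type*} [Fintype ι] (a b c d : ι → ℝ) (τ η : ℝ) :
    (fun pu : ℝ =>
        η * ∑ k, Real.logb 2
          (1 + a k * τ * pu ^ 2 /
            (b k * τ * pu ^ 2 + c k * pu + d k * τ * pu + 1)) -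
        Real.logb 2 (Real.exp 1) * η * (∑ k, a k * τ) * pu ^ 2)
      =O[𝓝 0] fun pu => pu ^ 3 := by
  let g (k : ι) (pu : ℝ) : ℝ :=
    a k * τ / (b k * τ * pu ^ 2 + c k * pu + d k * τ * pu + 1)
  have g_zero (k : ι) : g k 0 = a k * τ := by simp [g]
  have g_differentiableAt (k : ι) : DifferentiableAt ℝ (g k) 0 :=
    .fun_div (by fun_prop) (by fun_prop) (by simp)
  have sum_isBigO := IsBigO.fun_sum (s := univ) fun k _ =>
    logb_one_add_pow_mul_sub_isBigO 2 (g_differentiableAt k) two_ne_zero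
  refine (sum_isBigO.const_mul_left η).congr_left fun pu => ?_
  have snr_eq (k : ι) : pu ^ 2 * g k pu =
      a k * τ * pu ^ 2 / (b k * τ * pu ^ 2 + c k * pu + d k * τ * pu + 1) := by
    rw [mul_div_assoc', mul_comm]
  simp only [snr_eq, g_zero, sum_sub_distrib, ← sum_mul, ← mul_sum]
  ring

theorem stmt_11 (T K : ℕ) (hK : 0 < K) (hKT : K < T)
    (a b c d : Fin K → ℝ) (ha : ∀ k, 0 < a k) (hb : ∀ k, 0 ≤ b k)
    (hc : ∀ k, 0 ≤ c k) (hd : ∀ k, 0 ≤ d k)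
    (τ : ℝ) (hτ : 0 < τ) (hτT : τ < T) :
    (fun pu : ℝ =>
        (1 - τ / T) * ∑ k : Fin K, Real.logb 2
          (1 + a k * τ * pu ^ 2 /
            (b k * τ * pu ^ 2 + c k * pu + d k * τ * pu + 1)) -
        Real.logb 2 (Real.exp 1) * (1 - τ / T) * (∑ k : Fin K, a k * τ) * pu ^ 2)
      =O[𝓝[>] (0 : ℝ)] fun pu => pu ^ 3 :=
  (stmt_11_general a b c d τ (1 - τ / T)).mono nhdsWithin_le_nhds
end

section
/- Fix τ with 0 < τ < T and set p_p = p_u, and define the bit energy η(p_u) = p_u / S(p_u) for p_u > 0, where S(p_u) = (1 − τ/T) Σ_{k=1}^K log₂(1 + a_k τ p_u² / (b_k τ p_u² + c_k p_u + d_k τ p_u + 1)). Then S(p_u) > 0 for every p_u > 0, and η(p_u) → +∞ as p_u → 0⁺. Hence, with equal pilot and data powers, reducing the transmit power below some threshold increases the energy per bit, and the minimum bit energy is achieved at a strictly positive sum spectral efficiency. -/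
open Finset Filter Topology

/-! With equal pilot and data powers every SINR is of order `p ^ 2` as the power `p` tends to `0`:
the data signal and the quality of the channel estimate each contribute a factor `p`. Hence the sum
spectral efficiency vanishes at `p = 0` together with its first derivative, and the bit energy,
being the reciprocal of its slope between `0` and `p`, tends to `+∞`. -/

lemma tendsto_inv_slope_atTop_of_hasDerivWithinAt_zero {f : ℝ → ℝ} {x : ℝ}
    (hderiv : HasDerivWithinAt f 0 (Set.Ioi x) x) (hlt : ∀ᶠ y in 𝓝[>] x, f x < f y) :
    Tendsto (fun y => (slope f x y)⁻¹) (𝓝[>] x) atTop := by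
  have hslope : Tendsto (slope f x) (𝓝[>] x) (𝓝 0) :=
    (hasDerivWithinAt_iff_tendsto_slope' Set.self_notMem_Ioi).1 hderiv
  have hslope_pos : ∀ᶠ y in 𝓝[>] x, 0 < slope f x y := by
    filter_upwards [hlt, self_mem_nhdsWithin] with y hfy hy
    rw [slope_def_field]
    exact div_pos (sub_pos.2 hfy) (sub_pos.2 hy)
  exact (tendsto_nhdsWithin_iff.2 ⟨hslope, hslope_pos⟩).inv_tendsto_nhdsGT_zero

/-- The SINR of a user when pilots and data are both sent at power `p`, with pilot length `τ`.
The constants `a`, `b`, `c`, `d` collect the user's signal and interference coefficients, normalized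
so that the power-independent term of the denominator is `1`. -/
noncomputable def equalPowerSINR (a b c d τ p : ℝ) : ℝ :=
  a * τ * p ^ 2 / (b * τ * p ^ 2 + c * p + d * τ * p + 1)

lemma equalPowerSINR_zero (a b c d τ : ℝ) : equalPowerSINR a b c d τ 0 = 0 := by
  simp [equalPowerSINR]

lemma equalPowerSINR_pos {a b c d τ p : ℝ} (ha : 0 < a) (hb : 0 ≤ b) (hc : 0 ≤ c) (hd : 0 ≤ d)
    (hτ : 0 < τ) (hp : 0 < p) : 0 < equalPowerSINR a b c d τ p := by
  unfold equalPowerSINR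
  positivity

lemma hasDerivAt_equalPowerSINR_zero (a b c d τ : ℝ) :
    HasDerivAt (equalPowerSINR a b c d τ) 0 0 := by
  have hsq : HasDerivAt (fun p : ℝ => p ^ 2) 0 0 := by simpa using hasDerivAt_pow 2 (0 : ℝ)
  have hden : HasDerivAt (fun p => b * τ * p ^ 2 + c * p + d * τ * p + 1) (c + d * τ) 0 := by
    simpa using (((hsq.const_mul (b * τ)).add ((hasDerivAt_id 0).const_mul c)).add
      ((hasDerivAt_id 0).const_mul (d * τ))).add_const 1
  exact ((hsq.const_mul (a * τ)).fun_div hden (by simp)).congr_deriv (by simp)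

section SpectralEfficiency

variable {ι : Type*} [Fintype ι]

/-- The sum spectral efficiency of users with SINRs `γ k`, in bits per channel use; the factor
`1 - τ / T` accounts for the `τ` pilot symbols in each coherence interval of length `T`. -/
noncomputable def sumSpectralEfficiency (τ T : ℝ) (γ : ι → ℝ) : ℝ :=
  (1 - τ / T) * ∑ k, Real.logb 2 (1 + γ k)

lemma sumSpectralEfficiency_zero (τ T : ℝ) : sumSpectralEfficiency τ T (0 : ι → ℝ) = 0 := by
  simp [sumSpectralEfficiency]

lemma sumSpectralEfficiency_pos [Nonempty ι] {τ T : ℝ} (hT : 0 < T) (hτT : τ < T) {γ : ι → ℝ}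
    (hγ : ∀ k, 0 < γ k) : 0 < sumSpectralEfficiency τ T γ :=
  mul_pos (sub_pos.2 ((div_lt_one hT).2 hτT)) <|
    sum_pos (fun k _ => Real.logb_pos one_lt_two (lt_add_of_pos_right 1 (hγ k))) univ_nonempty

lemma hasDerivWithinAt_sumSpectralEfficiency (τ T : ℝ) {γ : ι → ℝ → ℝ} {γ' : ι → ℝ} {s : Set ℝ}
    {x : ℝ} (hderiv : ∀ k, HasDerivWithinAt (γ k) (γ' k) s x) (hne : ∀ k, 1 + γ k x ≠ 0) :
    HasDerivWithinAt (fun p => sumSpectralEfficiency τ T fun k => γ k p)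
      ((1 - τ / T) * ∑ k, γ' k / (1 + γ k x) / Real.log 2) s x :=
  (HasDerivWithinAt.fun_sum fun k _ =>
    (((hderiv k).const_add 1).log (hne k)).div_const (Real.log 2)).const_mul (1 - τ / T)

lemma tendsto_div_sumSpectralEfficiency_atTop [Nonempty ι] {τ T : ℝ} (hT : 0 < T) (hτT : τ < T)
    {γ : ι → ℝ → ℝ} (hzero : ∀ k, γ k 0 = 0)
    (hderiv : ∀ k, HasDerivWithinAt (γ k) 0 (Set.Ioi 0) 0)
    (hpos : ∀ k, ∀ᶠ p in 𝓝[>] 0, 0 < γ k p) :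
    Tendsto (fun p => p / sumSpectralEfficiency τ T fun k => γ k p) (𝓝[>] 0) atTop := by
  let S : ℝ → ℝ := fun p => sumSpectralEfficiency τ T fun k => γ k p
  have hS_zero : S 0 = 0 := by
    simp only [S, hzero]
    exact sumSpectralEfficiency_zero τ T
  have hS_deriv : HasDerivWithinAt S 0 (Set.Ioi 0) 0 := by
    simpa using hasDerivWithinAt_sumSpectralEfficiency τ T hderiv (by simp [hzero])
  have hS_pos : ∀ᶠ p in 𝓝[>] 0, S 0 < S p := by
    filter_upwards [eventually_all.2 hpos] with p hp
    rw [hS_zero]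
    exact sumSpectralEfficiency_pos hT hτT hp
  simpa only [slope_def_field, hS_zero, sub_zero, inv_div] using
    tendsto_inv_slope_atTop_of_hasDerivWithinAt_zero hS_deriv hS_pos

theorem stmt_12_general [Nonempty ι] {a b c d : ι → ℝ} (ha : ∀ k, 0 < a k) (hb : ∀ k, 0 ≤ b k)
    (hc : ∀ k, 0 ≤ c k) (hd : ∀ k, 0 ≤ d k) {τ T : ℝ} (hτ : 0 < τ) (hτT : τ < T) :
    (∀ p, 0 < p →
      0 < sumSpectralEfficiency τ T fun k => equalPowerSINR (a k) (b k) (c k) (d k) τ p) ∧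
    Tendsto
      (fun p => p /
        sumSpectralEfficiency τ T fun k => equalPowerSINR (a k) (b k) (c k) (d k) τ p)
      (𝓝[>] 0) atTop := by
  have hT : 0 < T := hτ.trans hτT
  have hpos (k : ι) (p : ℝ) (hp : 0 < p) : 0 < equalPowerSINR (a k) (b k) (c k) (d k) τ p :=
    equalPowerSINR_pos (ha k) (hb k) (hc k) (hd k) hτ hp
  exact ⟨fun p hp => sumSpectralEfficiency_pos hT hτT fun k => hpos k p hp,
    tendsto_div_sumSpectralEfficiency_atTop hT hτT
      (fun k => equalPowerSINR_zero (a k) (b k) (c k) (d k) τ)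
      (fun k => (hasDerivAt_equalPowerSINR_zero (a k) (b k) (c k) (d k) τ).hasDerivWithinAt)
      (fun k => eventually_mem_nhdsWithin.mono (hpos k))⟩

end SpectralEfficiency

theorem stmt_12 (T K : ℕ) (hK : 0 < K) (hKT : K < T)
    (a b c d : Fin K → ℝ) (ha : ∀ k, 0 < a k) (hb : ∀ k, 0 ≤ b k)
    (hc : ∀ k, 0 ≤ c k) (hd : ∀ k, 0 ≤ d k)
    (τ : ℝ) (hτ : 0 < τ) (hτT : τ < T) :
    (∀ pu : ℝ, 0 < pu →
      0 < (1 - τ / T) * ∑ k : Fin K, Real.logb 2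
        (1 + a k * τ * pu ^ 2 /
          (b k * τ * pu ^ 2 + c k * pu + d k * τ * pu + 1))) ∧
    Tendsto (fun pu : ℝ => pu /
        ((1 - τ / T) * ∑ k : Fin K, Real.logb 2
          (1 + a k * τ * pu ^ 2 /
            (b k * τ * pu ^ 2 + c k * pu + d k * τ * pu + 1))))
      (𝓝[>] (0 : ℝ)) atTop := by
  have : Nonempty (Fin K) := Fin.pos_iff_nonempty.1 hK
  exact stmt_12_general ha hb hc hd hτ hτT
end
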